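/- (Bézout in the plane) Two plane projective curves in P²(ℂ) of degrees 2 and 3 with no common irreducible component intersect in at most 6 points; if they intersect transversally, they intersect in exactly 6 points. -/

import Mathlib

open MvPolynomial

/-- The zero locus in `P²(ℂ)` of a polynomial. -/
def projZeroLocus (h : MvPolynomial (Fin 3) ℂ) :
    Set (Projectivization ℂ (Fin 3 → ℂ)) :=
  {p | eval p.rep h = 0}

/-! A point `a` of the conic lying off the curve `c` serves as a centre of projection. In a basis
`a, b, d` with `b` on the tangent line at `a`, the conic reads
`α y² + β y z + γ z² + δ x z = 0`. If `α = 0` or `δ = 0`, it splits into two lines; otherwise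
solving for `x` parametrizes it by quadratic polynomials in `s = y / z`, with `a` at `s = ∞`.
A line is parametrized likewise by linear polynomials. Substituting a parametrization of degree `k`
into a form `c` of degree `n` not vanishing at `∞` gives a polynomial of degree exactly `n * k`,
whose roots are the intersection points. A double root makes both gradients orthogonal to the
point and to the velocity there, so transversality makes all roots simple. -/

open scoped Polynomial LinearAlgebra.Projectivization

section Homogeneous

variable {σ R : Type*} [CommSemiring R] {n : ℕ} {g : MvPolynomial σ R}

lemma eval_smul_of_isHomogeneous (hg : g.IsHomogeneous n) (a : R) (v : σ → R) :
    eval (a • v) g = a ^ n * eval v g := by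
  rw [eval_eq, eval_eq, Finset.mul_sum]
  refine Finset.sum_congr rfl fun m hm => ?_
  simp only [Pi.smul_apply, smul_eq_mul, mul_pow, Finset.prod_mul_distrib,
    Finset.prod_pow_eq_pow_sum, ← hg.degree_eq_sum_deg_support hm]
  ring

lemma eval_zero_of_isHomogeneous (hg : g.IsHomogeneous n) (hn : n ≠ 0) : eval 0 g = 0 := by
  simpa [hn] using eval_smul_of_isHomogeneous hg 0 0

lemma ne_zero_of_eval_ne_zero_of_isHomogeneous (hg : g.IsHomogeneous n) (hn : n ≠ 0) {v : σ → R}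
    (hgv : eval v g ≠ 0) : v ≠ 0 := by
  rintro rfl
  exact hgv (eval_zero_of_isHomogeneous hg hn)

lemma not_isUnit_of_isHomogeneous [Nontrivial R] (hg : g.IsHomogeneous n) (hn : n ≠ 0) :
    ¬ IsUnit g := fun hu =>
  not_isUnit_zero (eval_zero_of_isHomogeneous hg hn ▸ hu.map (eval 0))

lemma exists_quadraticForm_eval_eq (hg : g.IsHomogeneous 2) :
    ∃ Q : QuadraticForm R (σ → R), ∀ v : σ → R, eval v g = Q v := by
  rw [← mem_homogeneousSubmodule, ← homogeneousSubmodule_one_pow, pow_two,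
    homogeneousSubmodule_one_eq_span_X, Submodule.span_mul_span] at hg
  induction hg using Submodule.span_induction with
  | mem _ hmem =>
    obtain ⟨_, ⟨i, rfl⟩, _, ⟨j, rfl⟩, rfl⟩ := hmem
    exact ⟨QuadraticMap.linMulLin (LinearMap.proj i) (LinearMap.proj j), by simp⟩
  | zero => exact ⟨0, by simp⟩
  | add _ _ _ _ ih₁ ih₂ =>
    obtain ⟨⟨Q₁, hQ₁⟩, Q₂, hQ₂⟩ := ih₁, ih₂
    exact ⟨Q₁ + Q₂, by simp [hQ₁, hQ₂]⟩
  | smul a _ _ ih =>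
    obtain ⟨Q, hQ⟩ := ih
    exact ⟨a • Q, by simp [hQ]⟩

end Homogeneous

section Gradient

variable {σ R : Type*} [CommSemiring R]

/-- The gradient of the polynomial `g` at the point `v`. -/
noncomputable def gradientAt (g : MvPolynomial σ R) (v : σ → R) : σ → R :=
  fun i => eval v (pderiv i g)

lemma gradientAt_mul (g h : MvPolynomial σ R) (v : σ → R) :
    gradientAt (g * h) v = eval v h • gradientAt g v + eval v g • gradientAt h v := by
  ext i
  simp [gradientAt, add_comm]

lemma gradientAt_dotProduct_self [Fintype σ] {n : ℕ} {g : MvPolynomial σ R}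
    (hg : g.IsHomogeneous n) (v : σ → R) : gradientAt g v ⬝ᵥ v = n * eval v g := by
  have euler := congrArg (eval v) hg.sum_X_mul_pderiv
  simpa [gradientAt, dotProduct, mul_comm] using euler

end Gradient

section Substitution

variable {σ R : Type*} [CommSemiring R]

lemma coeff_prod_sum_of_natDegree_le {ι : Type*} (s : Finset ι) (f : ι → R[X]) (d : ι → ℕ)
    (h : ∀ i ∈ s, (f i).natDegree ≤ d i) :
    (∏ i ∈ s, f i).coeff (∑ i ∈ s, d i) = ∏ i ∈ s, (f i).coeff (d i) := by
  classical
  induction s using Finset.induction_on with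
  | empty => simp
  | insert j s hj ih =>
    rw [Finset.forall_mem_insert] at h
    rw [Finset.prod_insert hj, Finset.sum_insert hj, Finset.prod_insert hj,
      Polynomial.coeff_mul_add_eq_of_natDegree_le h.1, ih h.2]
    exact (Polynomial.natDegree_prod_le _ _).trans (Finset.sum_le_sum h.2)

/-- The point at parameter `s` of the curve with polynomial coordinates `P`. -/
def curvePoint (P : σ → R[X]) (s : R) : σ → R := fun i => (P i).eval s

/-- The velocity at parameter `s` of the curve with polynomial coordinates `P`. -/
noncomputable def curveVelocity (P : σ → R[X]) (s : R) : σ → R :=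
  curvePoint (fun i => Polynomial.derivative (P i)) s

/-- The point at `s = ∞` of the projective curve with polynomial coordinates `P` of degree at most
`k`, namely the limit of `s⁻ᵏ • P s`. -/
def curvePointAtInfinity (P : σ → R[X]) (k : ℕ) : σ → R := fun i => (P i).coeff k

lemma eval_aeval_eq_eval_curvePoint (P : σ → R[X]) (g : MvPolynomial σ R) (s : R) :
    (aeval P g).eval s = eval (curvePoint P s) g := by
  have hcomp := DFunLike.congr_fun (comp_aeval (R := R) P (Polynomial.aeval s)) g
  change _ = eval (fun i => (P i).eval s) g
  simpa using hcomp

lemma aeval_eq_sum_support (P : σ → R[X]) (g : MvPolynomial σ R) :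
    aeval P g = ∑ m ∈ g.support, Polynomial.C (coeff m g) * ∏ i ∈ m.support, P i ^ m i := by
  rw [aeval_def, eval₂_eq, Polynomial.algebraMap_eq]

lemma derivative_aeval [Fintype σ] (P : σ → R[X]) (g : MvPolynomial σ R) :
    Polynomial.derivative (aeval P g) =
      ∑ i, aeval P (pderiv i g) * Polynomial.derivative (P i) := by
  classical
  induction g using MvPolynomial.induction_on with
  | C a => simp [Polynomial.algebraMap_eq]
  | add g h hg hh => simp [hg, hh, add_mul, Finset.sum_add_distrib]
  | mul_X g i hg =>
    simp [pderiv_X, Pi.single_apply, hg, add_mul, Finset.sum_add_distrib, Finset.mul_sum, apply_ite,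
      mul_assoc, mul_comm]

lemma eval_derivative_aeval [Fintype σ] (P : σ → R[X]) (g : MvPolynomial σ R) (s : R) :
    (Polynomial.derivative (aeval P g)).eval s =
      gradientAt g (curvePoint P s) ⬝ᵥ curveVelocity P s := by
  rw [derivative_aeval, Polynomial.eval_finsetSum]
  simp only [Polynomial.eval_mul, eval_aeval_eq_eval_curvePoint]
  rfl

variable {n k : ℕ} {P : σ → R[X]} {g : MvPolynomial σ R}

lemma natDegree_aeval_le (hg : g.IsHomogeneous n) (hP : ∀ i, (P i).natDegree ≤ k) :
    (aeval P g).natDegree ≤ n * k := by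
  rw [aeval_eq_sum_support]
  refine Polynomial.natDegree_sum_le_of_forall_le _ _ fun m hm => ?_
  calc (Polynomial.C (coeff m g) * ∏ i ∈ m.support, P i ^ m i).natDegree
      ≤ ∑ i ∈ m.support, (P i ^ m i).natDegree :=
        (Polynomial.natDegree_C_mul_le _ _).trans (Polynomial.natDegree_prod_le _ _)
    _ ≤ ∑ i ∈ m.support, m i * k :=
        Finset.sum_le_sum fun i _ => Polynomial.natDegree_pow_le_of_le _ (hP i)
    _ = n * k := by rw [hg.degree_eq_sum_deg_support hm, Finset.sum_mul]

lemma coeff_aeval_eq_eval_curvePointAtInfinity (hg : g.IsHomogeneous n)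
    (hP : ∀ i, (P i).natDegree ≤ k) :
    (aeval P g).coeff (n * k) = eval (curvePointAtInfinity P k) g := by
  rw [aeval_eq_sum_support, Polynomial.finsetSum_coeff, eval_eq]
  refine Finset.sum_congr rfl fun m hm => ?_
  have hdeg : n * k = ∑ i ∈ m.support, m i * k := by
    rw [hg.degree_eq_sum_deg_support hm, Finset.sum_mul]
  rw [Polynomial.coeff_C_mul, hdeg, coeff_prod_sum_of_natDegree_le _ _ _ fun i _ =>
    Polynomial.natDegree_pow_le_of_le _ (hP i)]
  simp only [Polynomial.coeff_pow_of_natDegree_le (hP _), curvePointAtInfinity]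

lemma natDegree_aeval_eq (hg : g.IsHomogeneous n) (hP : ∀ i, (P i).natDegree ≤ k)
    (hinf : eval (curvePointAtInfinity P k) g ≠ 0) : (aeval P g).natDegree = n * k :=
  (natDegree_aeval_le hg hP).antisymm <| Polynomial.le_natDegree_of_ne_zero <| by
    rwa [coeff_aeval_eq_eval_curvePointAtInfinity hg hP]

lemma aeval_ne_zero_of_eval_curvePointAtInfinity_ne_zero (hg : g.IsHomogeneous n)
    (hP : ∀ i, (P i).natDegree ≤ k) (hinf : eval (curvePointAtInfinity P k) g ≠ 0) :
    aeval P g ≠ 0 := fun hzero => hinf <| by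
  rw [← coeff_aeval_eq_eval_curvePointAtInfinity hg hP, hzero, Polynomial.coeff_zero]

end Substitution

section ProjectiveZeros

variable {σ K : Type*} [Field K]

/-- The zero locus of `g` in the projective space of `σ → K`. It is independent of the chosen
representatives when `g` is homogeneous. -/
def projectiveZeros (g : MvPolynomial σ K) : Set (ℙ K (σ → K)) := {p | eval p.rep g = 0}

lemma mk_mem_projectiveZeros_iff {n : ℕ} {g : MvPolynomial σ K} (hg : g.IsHomogeneous n)
    {v : σ → K} (hv : v ≠ 0) : Projectivization.mk K v hv ∈ projectiveZeros g ↔ eval v g = 0 := by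
  obtain ⟨a, ha⟩ := Projectivization.exists_smul_eq_mk_rep K v hv
  have hrep : eval (Projectivization.mk K v hv).rep g = (a : K) ^ n * eval v g := by
    rw [← ha, ← eval_smul_of_isHomogeneous hg, Units.smul_def]
  simp [projectiveZeros, hrep]

lemma projectiveZeros_mul (g h : MvPolynomial σ K) :
    projectiveZeros (g * h) = projectiveZeros g ∪ projectiveZeros h := by
  ext p
  simp [projectiveZeros]

/-- The hypersurfaces `g = 0` and `c = 0` are transversal: their gradients are linearly independent
at every common projective zero. -/
def Transversal (g c : MvPolynomial σ K) : Prop :=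
  ∀ v : σ → K, v ≠ 0 → eval v g = 0 → eval v c = 0 →
    LinearIndependent K ![gradientAt g v, gradientAt c v]

lemma Transversal.of_mul_left {g h c : MvPolynomial σ K} (hghc : Transversal (g * h) c) :
    Transversal g c := by
  intro v hv hgv hcv
  have hind := hghc v hv (by simp [hgv]) hcv
  rw [gradientAt_mul, hgv, zero_smul, add_zero] at hind
  have hhv : eval v h ≠ 0 := left_ne_zero_of_smul (hind.ne_zero 0)
  rw [LinearIndependent.pair_iff] at hind ⊢
  intro s t hst
  have := hind s (eval v h * t) (by rw [mul_smul, smul_comm s, ← smul_add, hst, smul_zero])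
  simpa [hhv] using this

lemma Transversal.disjoint {g h c : MvPolynomial σ K} (hghc : Transversal (g * h) c) :
    Disjoint (projectiveZeros g ∩ projectiveZeros c) (projectiveZeros h ∩ projectiveZeros c) := by
  rw [Set.disjoint_left]
  rintro p ⟨hgp : eval p.rep g = 0, hcp⟩ ⟨hhp : eval p.rep h = 0, -⟩
  refine (hghc p.rep p.rep_nonzero (by simp [hgp]) hcp).ne_zero 0 ?_
  simp [gradientAt_mul, hgp, hhp]

/-- Bézout's count for `g = 0` and `c = 0` with expected number of intersection points `N`: at most
`N` common projective zeros, and exactly `N` if the intersection is transversal. -/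
def BezoutCount (g c : MvPolynomial σ K) (N : ℕ) : Prop :=
  (projectiveZeros g ∩ projectiveZeros c).encard ≤ N ∧
    (Transversal g c → (projectiveZeros g ∩ projectiveZeros c).encard = N)

lemma BezoutCount.mul {g h c : MvPolynomial σ K} {M N : ℕ} (hg : BezoutCount g c M)
    (hh : BezoutCount h c N) : BezoutCount (g * h) c (M + N) := by
  rw [BezoutCount, projectiveZeros_mul, Set.union_inter_distrib_right, Nat.cast_add]
  refine ⟨(Set.encard_union_le _ _).trans (add_le_add hg.1 hh.1), fun htr => ?_⟩
  rw [Set.encard_union_eq htr.disjoint, hg.2 htr.of_mul_left,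
    hh.2 (Transversal.of_mul_left (mul_comm g h ▸ htr))]

lemma BezoutCount.finite_and_ncard {g c : MvPolynomial σ K} {N : ℕ}
    (hN : BezoutCount g c N) :
    (projectiveZeros g ∩ projectiveZeros c).Finite ∧
    (projectiveZeros g ∩ projectiveZeros c).ncard ≤ N ∧
    (Transversal g c → (projectiveZeros g ∩ projectiveZeros c).ncard = N) := by
  obtain ⟨hfin, hle⟩ := Set.encard_le_coe_iff_finite_ncard_le.mp hN.1
  exact ⟨hfin, hle, fun htr => by simp [Set.ncard_def, hN.2 htr]⟩

lemma exists_eval_eq_zero_and_eval_ne_zero [IsAlgClosed K] [Finite σ] {r c : MvPolynomial σ K}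
    (hrc : IsRelPrime r c) (hr : ¬ IsUnit r) : ∃ v, eval v r = 0 ∧ eval v c ≠ 0 := by
  by_contra! hvanish
  have hrad : c ∈ (Ideal.span {r}).radical := by
    rw [← vanishingIdeal_zeroLocus_eq_radical (K := K), mem_vanishingIdeal_iff]
    intro v hv
    exact hvanish v (hv r (Ideal.mem_span_singleton_self r))
  obtain ⟨m, hm⟩ := hrad
  exact hr (hrc.pow_right dvd_rfl (Ideal.mem_span_singleton.mp hm))

end ProjectiveZeros

lemma not_linearIndependent_of_dotProduct_eq_zero {K : Type*} [Field K] {g h u v : Fin 3 → K}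
    (hgh : LinearIndependent K ![g, h]) (hgu : g ⬝ᵥ u = 0) (hgv : g ⬝ᵥ v = 0)
    (hhu : h ⬝ᵥ u = 0) (hhv : h ⬝ᵥ v = 0) : ¬ LinearIndependent K ![u, v] := by
  intro huv
  have hmul : (Matrix.of ![g, h]) * (Matrix.of ![u, v]).transpose = 0 := by
    ext i j
    fin_cases i <;> fin_cases j <;> assumption
  have hgh_rank : (Matrix.of ![g, h]).rank = Fintype.card (Fin 2) := hgh.rank_matrix
  have huv_rank : (Matrix.of ![u, v]).rank = Fintype.card (Fin 2) := huv.rank_matrix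
  have hrank := Matrix.rank_add_rank_le_card_of_mul_eq_zero hmul
  rw [Matrix.rank_transpose, hgh_rank, huv_rank] at hrank
  simp at hrank

section LinearForm

variable {σ R : Type*} [Fintype σ] [DecidableEq σ] [CommSemiring R]

/-- The linear functional `φ` as a homogeneous polynomial of degree one. -/
noncomputable def linearForm (φ : Module.Dual R (σ → R)) : MvPolynomial σ R :=
  ∑ i, C (φ (Pi.single i 1)) * X i

lemma linearForm_isHomogeneous (φ : Module.Dual R (σ → R)) : (linearForm φ).IsHomogeneous 1 :=
  IsHomogeneous.sum _ _ _ fun i _ => isHomogeneous_C_mul_X _ i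

lemma sum_apply_single_mul (φ : Module.Dual R (σ → R)) (v : σ → R) :
    ∑ i, φ (Pi.single i 1) * v i = φ v := by
  conv_rhs => rw [pi_eq_sum_univ' v, map_sum]
  simp [mul_comm]

lemma eval_linearForm (φ : Module.Dual R (σ → R)) (v : σ → R) :
    eval v (linearForm φ) = φ v := by
  simp [linearForm, sum_apply_single_mul]

lemma gradientAt_linearForm_dotProduct (φ : Module.Dual R (σ → R)) (v w : σ → R) :
    gradientAt (linearForm φ) v ⬝ᵥ w = φ w := by
  simp [gradientAt, linearForm, dotProduct, pderiv_X, Pi.single_apply, sum_apply_single_mul]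

end LinearForm

section Parametrization

variable {σ K : Type*} [Fintype σ] [DecidableEq σ] [Field K]

/-- `P` parametrizes the cone `g = 0` by polynomials of degree at most `k`, up to scaling and with
the parameter allowed to be infinite. The linear functionals `y` and `z` recover the parameter of a
point as `y / z`. -/
structure IsParametrization (g : MvPolynomial σ K) (P : σ → K[X]) (k : ℕ)
    (y z : Module.Dual K (σ → K)) : Prop where
  natDegree_le : ∀ i, (P i).natDegree ≤ k
  aeval_eq_zero : aeval P g = 0
  aeval_linearForm_num : aeval P (linearForm y) = Polynomial.X
  aeval_linearForm_den : aeval P (linearForm z) = 1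
  exists_eq_smul : ∀ v, eval v g = 0 →
    ∃ a : K, v = a • curvePointAtInfinity P k ∨ ∃ s, v = a • curvePoint P s

namespace IsParametrization

variable {g c : MvPolynomial σ K} {P : σ → K[X]} {k m n : ℕ} {y z : Module.Dual K (σ → K)}

lemma eval_curvePoint (hP : IsParametrization g P k y z) (s : K) :
    eval (curvePoint P s) g = 0 := by
  rw [← eval_aeval_eq_eval_curvePoint, hP.aeval_eq_zero, Polynomial.eval_zero]

lemma num_curvePoint (hP : IsParametrization g P k y z) (s : K) : y (curvePoint P s) = s := by
  rw [← eval_linearForm, ← eval_aeval_eq_eval_curvePoint, hP.aeval_linearForm_num,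
    Polynomial.eval_X]

lemma den_curvePoint (hP : IsParametrization g P k y z) (s : K) : z (curvePoint P s) = 1 := by
  rw [← eval_linearForm, ← eval_aeval_eq_eval_curvePoint, hP.aeval_linearForm_den,
    Polynomial.eval_one]

lemma num_curveVelocity (hP : IsParametrization g P k y z) (s : K) :
    y (curveVelocity P s) = 1 := by
  rw [← gradientAt_linearForm_dotProduct y (curvePoint P s), ← eval_derivative_aeval,
    hP.aeval_linearForm_num, Polynomial.derivative_X, Polynomial.eval_one]

lemma den_curveVelocity (hP : IsParametrization g P k y z) (s : K) :
    z (curveVelocity P s) = 0 := by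
  rw [← gradientAt_linearForm_dotProduct z (curvePoint P s), ← eval_derivative_aeval,
    hP.aeval_linearForm_den, Polynomial.derivative_one, Polynomial.eval_zero]

lemma linearIndependent_curvePoint_curveVelocity (hP : IsParametrization g P k y z) (s : K) :
    LinearIndependent K ![curvePoint P s, curveVelocity P s] := by
  rw [LinearIndependent.pair_iff]
  intro a b hab
  have ha : a = 0 := by
    simpa [hP.den_curvePoint, hP.den_curveVelocity] using congrArg z hab
  have hb : a * s + b = 0 := by
    simpa [hP.num_curvePoint, hP.num_curveVelocity] using congrArg y hab
  exact ⟨ha, by simpa [ha] using hb⟩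

lemma curvePoint_ne_zero (hP : IsParametrization g P k y z) (s : K) : curvePoint P s ≠ 0 :=
  (hP.linearIndependent_curvePoint_curveVelocity s).ne_zero 0

/-- The parametrization as a map from the affine line to projective space. -/
def toProj (hP : IsParametrization g P k y z) (s : K) : ℙ K (σ → K) :=
  Projectivization.mk K (curvePoint P s) (hP.curvePoint_ne_zero s)

lemma toProj_injective (hP : IsParametrization g P k y z) : Function.Injective hP.toProj := by
  intro s t hst
  obtain ⟨a, ha⟩ := (Projectivization.mk_eq_mk_iff' K _ _ _ _).mp hst
  have ha_one : a = 1 := by simpa [hP.den_curvePoint] using congrArg z ha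
  simpa [hP.num_curvePoint, ha_one] using (congrArg y ha).symm

lemma inter_eq_image (hP : IsParametrization g P k y z) (hg : g.IsHomogeneous m)
    (hc : c.IsHomogeneous n) (hinf : eval (curvePointAtInfinity P k) c ≠ 0) :
    projectiveZeros g ∩ projectiveZeros c = hP.toProj '' {s | (aeval P c).IsRoot s} := by
  simp only [Polynomial.IsRoot, eval_aeval_eq_eval_curvePoint]
  ext p
  constructor
  · induction p with | h v hv =>
    rw [Set.mem_inter_iff, mk_mem_projectiveZeros_iff hg, mk_mem_projectiveZeros_iff hc]
    rintro ⟨hgv, hcv⟩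
    obtain ⟨a, rfl | ⟨s, rfl⟩⟩ := hP.exists_eq_smul v hgv
    · have ha := left_ne_zero_of_smul hv
      simp [eval_smul_of_isHomogeneous hc, ha, hinf] at hcv
    · have ha := left_ne_zero_of_smul hv
      refine ⟨s, by simpa [eval_smul_of_isHomogeneous hc, ha] using hcv, ?_⟩
      exact (Projectivization.mk_eq_mk_iff' K _ _ _ _).mpr ⟨a⁻¹, inv_smul_smul₀ ha _⟩
  · rintro ⟨s, hs, rfl⟩
    exact ⟨(mk_mem_projectiveZeros_iff hg _).mpr (hP.eval_curvePoint s),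
      (mk_mem_projectiveZeros_iff hc _).mpr hs⟩

lemma encard_inter_eq_card_roots [DecidableEq K] (hP : IsParametrization g P k y z)
    (hg : g.IsHomogeneous m) (hc : c.IsHomogeneous n)
    (hinf : eval (curvePointAtInfinity P k) c ≠ 0) :
    (projectiveZeros g ∩ projectiveZeros c).encard = (aeval P c).roots.toFinset.card := by
  have hroots : {s | (aeval P c).IsRoot s} = ((aeval P c).roots.toFinset : Set K) := by
    ext s
    simp [aeval_ne_zero_of_eval_curvePointAtInfinity_ne_zero hc hP.natDegree_le hinf]
  rw [hP.inter_eq_image hg hc hinf, hP.toProj_injective.encard_image, hroots,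
    Set.encard_coe_eq_coe_finsetCard]

lemma nodup_roots_of_transversal {g c : MvPolynomial (Fin 3) K} {P : Fin 3 → K[X]}
    {y z : Module.Dual K (Fin 3 → K)} (hP : IsParametrization g P k y z)
    (hg : g.IsHomogeneous m) (hc : c.IsHomogeneous n) (htr : Transversal g c) :
    (aeval P c).roots.Nodup := by
  classical
  rcases eq_or_ne (aeval P c) 0 with hzero | hzero
  · simp [hzero]
  rw [Multiset.nodup_iff_count_le_one]
  intro s
  rw [Polynomial.count_roots]
  by_contra! hmult
  obtain ⟨hroot, hder⟩ := (Polynomial.one_lt_rootMultiplicity_iff_isRoot hzero).mp hmult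
  rw [Polynomial.IsRoot, eval_aeval_eq_eval_curvePoint] at hroot
  rw [Polynomial.IsRoot, eval_derivative_aeval] at hder
  have hgs := hP.eval_curvePoint s
  refine not_linearIndependent_of_dotProduct_eq_zero
    (htr _ (hP.curvePoint_ne_zero s) hgs hroot) ?_ ?_ ?_ hder
    (hP.linearIndependent_curvePoint_curveVelocity s)
  · rw [gradientAt_dotProduct_self hg, hgs, mul_zero]
  · rw [← eval_derivative_aeval, hP.aeval_eq_zero, Polynomial.derivative_zero,
      Polynomial.eval_zero]
  · rw [gradientAt_dotProduct_self hc, hroot, mul_zero]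

lemma bezoutCount [IsAlgClosed K] {g c : MvPolynomial (Fin 3) K} {P : Fin 3 → K[X]}
    {y z : Module.Dual K (Fin 3 → K)} (hP : IsParametrization g P k y z)
    (hg : g.IsHomogeneous m) (hc : c.IsHomogeneous n)
    (hinf : eval (curvePointAtInfinity P k) c ≠ 0) : BezoutCount g c (n * k) := by
  classical
  rw [BezoutCount, hP.encard_inter_eq_card_roots hg hc hinf, Nat.cast_le, Nat.cast_inj,
    ← natDegree_aeval_eq hc hP.natDegree_le hinf]
  refine ⟨(Multiset.toFinset_card_le _).trans (Polynomial.card_roots' _), fun htr => ?_⟩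
  rw [Multiset.toFinset_card_of_nodup (hP.nodup_roots_of_transversal hg hc htr),
    IsAlgClosed.card_roots_eq_natDegree]

end IsParametrization

end Parametrization

section CurveOfCoords

variable {ι σ R : Type*} [Fintype ι] [CommSemiring R]

/-- The curve whose coordinates with respect to the vectors `B` are the polynomials `p`. -/
noncomputable def curveOfCoords (B : ι → σ → R) (p : ι → R[X]) : σ → R[X] :=
  fun i => ∑ j, Polynomial.C (B j i) * p j

lemma natDegree_curveOfCoords_le (B : ι → σ → R) {p : ι → R[X]} {k : ℕ}
    (hp : ∀ j, (p j).natDegree ≤ k) (i : σ) : (curveOfCoords B p i).natDegree ≤ k :=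
  Polynomial.natDegree_sum_le_of_forall_le _ _ fun j _ =>
    (Polynomial.natDegree_C_mul_le _ _).trans (hp j)

lemma curvePoint_curveOfCoords (B : ι → σ → R) (p : ι → R[X]) (s : R) :
    curvePoint (curveOfCoords B p) s = ∑ j, (p j).eval s • B j := by
  ext i
  simp [curvePoint, curveOfCoords, Polynomial.eval_finsetSum, mul_comm]

lemma curvePointAtInfinity_curveOfCoords (B : ι → σ → R) (p : ι → R[X]) (k : ℕ) :
    curvePointAtInfinity (curveOfCoords B p) k = ∑ j, (p j).coeff k • B j := by
  ext i
  simp [curvePointAtInfinity, curveOfCoords, Polynomial.finsetSum_coeff, mul_comm]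

lemma aeval_linearForm [Fintype σ] [DecidableEq σ] (P : σ → R[X]) (φ : Module.Dual R (σ → R)) :
    aeval P (linearForm φ) = ∑ i, Polynomial.C (φ (Pi.single i 1)) * P i := by
  simp [linearForm, Polynomial.algebraMap_eq]

lemma aeval_curveOfCoords_linearForm_coord [Fintype σ] [DecidableEq σ]
    (B : Module.Basis ι R (σ → R)) (p : ι → R[X]) (j : ι) :
    aeval (curveOfCoords B p) (linearForm (B.coord j)) = p j := by
  classical
  have hswap : ∀ l, ∑ i, Polynomial.C (B.coord j (Pi.single i 1)) * Polynomial.C (B l i) =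
      if l = j then 1 else 0 := fun l => by
    simp_rw [← Polynomial.C_mul, ← map_sum, sum_apply_single_mul (B.coord j) (B l)]
    rw [Module.Basis.coord_apply, Module.Basis.repr_self, Finsupp.single_apply]
    split_ifs <;> simp
  simp_rw [aeval_linearForm, curveOfCoords, Finset.mul_sum, ← mul_assoc]
  rw [Finset.sum_comm]
  simp_rw [← Finset.sum_mul, hswap]
  simp

end CurveOfCoords


section Lines

variable {K : Type*} [Field K]

lemma exists_basis_of_apply_eq_zero {V : Type*} [AddCommGroup V] [Module K V]
    (hV : Module.finrank K V = 3) {φ : Module.Dual K V} {a : V} (ha : a ≠ 0) (hφa : φ a = 0) :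
    ∃ B : Module.Basis (Fin 3) K V, B 0 = a ∧ φ (B 1) = 0 := by
  have : FiniteDimensional K V := .of_finrank_pos (by omega)
  have hker : 1 < Module.finrank K (LinearMap.ker φ) := by
    have hrank := LinearMap.finrank_range_add_finrank_ker φ
    have hrange := Submodule.finrank_le (LinearMap.range φ)
    rw [Module.finrank_self] at hrange
    omega
  have ha_ker : (⟨a, hφa⟩ : LinearMap.ker φ) ≠ 0 := by simpa [Subtype.ext_iff] using ha
  obtain ⟨b, hab⟩ := exists_linearIndependent_pair_of_one_lt_finrank hker ha_ker
  have hab' : LinearIndependent K ![a, (b : V)] := by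
    rw [LinearIndependent.pair_iff] at hab ⊢
    exact fun s t hst => hab s t (Subtype.ext hst)
  obtain ⟨d, hd⟩ := exists_linearIndependent_snoc_of_lt_finrank hab' (by omega)
  refine ⟨basisOfLinearIndependentOfCardEqFinrank hd (by simp [hV]), ?_, ?_⟩
  · simp
  · simp

lemma exists_eq_smul_add_smul_add_smul {R M : Type*} [Semiring R] [AddCommMonoid M] [Module R M]
    (B : Module.Basis (Fin 3) R M) (v : M) : ∃ x y z : R, v = x • B 0 + y • B 1 + z • B 2 :=
  ⟨_, _, _, by rw [← Fin.sum_univ_three fun j => B.repr v j • B j, B.sum_repr]⟩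

/-- The coordinates `(s, 1, 0)` of the points of the line spanned by the first two vectors of a
basis. -/
noncomputable def lineCoords (R : Type*) [Semiring R] : Fin 3 → R[X] := ![Polynomial.X, 1, 0]

lemma isParametrization_linearForm [Infinite K] {φ : Module.Dual K (Fin 3 → K)} (hφ : φ ≠ 0)
    (B : Module.Basis (Fin 3) K (Fin 3 → K)) (hφ0 : φ (B 0) = 0) (hφ1 : φ (B 1) = 0) :
    IsParametrization (linearForm φ) (curveOfCoords B (lineCoords K)) 1
      (B.coord 0) (B.coord 1) where
  natDegree_le := natDegree_curveOfCoords_le B fun j => by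
    fin_cases j <;> simp [lineCoords]
  aeval_eq_zero := Polynomial.funext fun s => by
    simp [eval_aeval_eq_eval_curvePoint, eval_linearForm, curvePoint_curveOfCoords,
      Fin.sum_univ_three, lineCoords, hφ0, hφ1]
  aeval_linearForm_num := aeval_curveOfCoords_linearForm_coord B _ 0
  aeval_linearForm_den := aeval_curveOfCoords_linearForm_coord B _ 1
  exists_eq_smul v hv := by
    have hφ2 : φ (B 2) ≠ 0 := fun hφ2 => hφ <| B.ext fun j => by
      fin_cases j <;> assumption
    obtain ⟨x, y, z, rfl⟩ := exists_eq_smul_add_smul_add_smul B v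
    obtain rfl : z = 0 := by simpa [eval_linearForm, hφ0, hφ1, hφ2] using hv
    simp only [curvePointAtInfinity_curveOfCoords, curvePoint_curveOfCoords, lineCoords,
      Fin.sum_univ_three]
    rcases eq_or_ne y 0 with rfl | hy
    · exact ⟨x, .inl (by simp [Polynomial.coeff_one])⟩
    · exact ⟨y, .inr ⟨x / y, by simp [smul_smul, mul_div_cancel₀ _ hy]⟩⟩

lemma bezoutCount_linearForm [IsAlgClosed K] {φ : Module.Dual K (Fin 3 → K)} (hφ : φ ≠ 0)
    {c : MvPolynomial (Fin 3) K} {n : ℕ} (hc : c.IsHomogeneous n) (hn : n ≠ 0)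
    (hφc : IsRelPrime (linearForm φ) c) : BezoutCount (linearForm φ) c n := by
  have hhom := linearForm_isHomogeneous φ
  obtain ⟨a, hφa, hca⟩ := exists_eval_eq_zero_and_eval_ne_zero hφc
    (not_isUnit_of_isHomogeneous hhom one_ne_zero)
  rw [eval_linearForm] at hφa
  have ha := ne_zero_of_eval_ne_zero_of_isHomogeneous hc hn hca
  obtain ⟨B, rfl, hφb⟩ := exists_basis_of_apply_eq_zero (by simp) ha hφa
  rw [← mul_one n]
  refine (isParametrization_linearForm hφ B hφa hφb).bezoutCount hhom hc ?_
  simpa [curvePointAtInfinity_curveOfCoords, Fin.sum_univ_three, lineCoords,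
    Polynomial.coeff_one] using hca

end Lines

section Conics

lemma quadraticForm_smul_add_smul_add_smul {R M : Type*} [CommRing R] [AddCommGroup M] [Module R M]
    (Q : QuadraticForm R M) {a b : M} (ha : Q a = 0) (hab : QuadraticMap.polar Q a b = 0)
    (d : M) (x y z : R) :
    Q (x • a + y • b + z • d) = Q b * y ^ 2 + QuadraticMap.polar Q b d * y * z + Q d * z ^ 2 +
      QuadraticMap.polar Q a d * x * z := by
  rw [QuadraticMap.map_add Q, QuadraticMap.map_add Q, QuadraticMap.polar_add_left]
  simp only [QuadraticMap.map_smul, QuadraticMap.polar_smul_left, QuadraticMap.polar_smul_right,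
    smul_eq_mul, ha, hab]
  ring

variable {K : Type*} [Field K]

lemma exists_mul_sq_add_mul_add_eq_zero [IsAlgClosed K] {α : K} (hα : α ≠ 0) (β γ : K) :
    ∃ r, α * r ^ 2 + β * r + γ = 0 := by
  obtain ⟨r, hr⟩ := IsAlgClosed.exists_root
    (Polynomial.C α * Polynomial.X ^ 2 + Polynomial.C β * Polynomial.X + Polynomial.C γ)
    (by rw [Polynomial.degree_quadratic hα]; exact two_ne_zero)
  exact ⟨r, by simpa using hr⟩

/-- The coordinates `(-(α s² + β s + γ) / δ, s, 1)` of the points of the conic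
`α y² + β y z + γ z² + δ x z = 0`. -/
noncomputable def conicCoords (α β γ δ : K) : Fin 3 → K[X] :=
  ![Polynomial.C (-δ⁻¹) * (Polynomial.C α * Polynomial.X ^ 2 + Polynomial.C β * Polynomial.X +
    Polynomial.C γ), Polynomial.X, 1]

lemma curvePoint_conicCoords (α β γ δ : K) (B : Fin 3 → Fin 3 → K) (s : K) :
    curvePoint (curveOfCoords B (conicCoords α β γ δ)) s =
      (-δ⁻¹ * (α * s ^ 2 + β * s + γ)) • B 0 + s • B 1 + (1 : K) • B 2 := by
  simp [curvePoint_curveOfCoords, Fin.sum_univ_three, conicCoords]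

lemma curvePointAtInfinity_conicCoords (α β γ δ : K) (B : Fin 3 → Fin 3 → K) :
    curvePointAtInfinity (curveOfCoords B (conicCoords α β γ δ)) 2 = (-δ⁻¹ * α) • B 0 := by
  simp [curvePointAtInfinity_curveOfCoords, Fin.sum_univ_three, conicCoords, Polynomial.coeff_one,
    Polynomial.coeff_X]

/-- In the coordinates `x, y, z` of the basis `B`, the form `q` is `α y² + β y z + γ z² + δ x z`.
Thus the conic `q = 0` passes through `B 0`, with tangent line `z = 0` there when `δ ≠ 0`. -/
def HasTangentEquation (q : MvPolynomial (Fin 3) K) (B : Module.Basis (Fin 3) K (Fin 3 → K))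
    (α β γ δ : K) : Prop :=
  ∀ x y z, eval (x • B 0 + y • B 1 + z • B 2) q =
    α * y ^ 2 + β * y * z + γ * z ^ 2 + δ * x * z

lemma exists_hasTangentEquation {q : MvPolynomial (Fin 3) K} (hq : q.IsHomogeneous 2)
    {a : Fin 3 → K} (ha : a ≠ 0) (hqa : eval a q = 0) :
    ∃ B : Module.Basis (Fin 3) K (Fin 3 → K), B 0 = a ∧
      ∃ α β γ δ, HasTangentEquation q B α β γ δ := by
  obtain ⟨Q, hQ⟩ := exists_quadraticForm_eval_eq hq
  rw [hQ] at hqa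
  have hpolar : QuadraticMap.polarBilin Q a a = 0 := by simp [hqa]
  obtain ⟨B, rfl, hb⟩ := exists_basis_of_apply_eq_zero (by simp) ha hpolar
  refine ⟨B, rfl, Q (B 1), QuadraticMap.polar Q (B 1) (B 2), Q (B 2),
    QuadraticMap.polar Q (B 0) (B 2), fun x y z => ?_⟩
  rw [hQ, quadraticForm_smul_add_smul_add_smul Q hqa hb]

namespace HasTangentEquation

variable {q : MvPolynomial (Fin 3) K} {B : Module.Basis (Fin 3) K (Fin 3 → K)} {α β γ δ : K}

lemma eval_eq (hq : HasTangentEquation q B α β γ δ) (v : Fin 3 → K) :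
    eval v q = α * B.coord 1 v ^ 2 + β * B.coord 1 v * B.coord 2 v + γ * B.coord 2 v ^ 2 +
      δ * B.coord 0 v * B.coord 2 v := by
  conv_lhs => rw [← B.sum_repr v, Fin.sum_univ_three, hq]
  rfl

lemma exists_eq_linearForm_mul [IsAlgClosed K] (hq : HasTangentEquation q B α β γ δ)
    (hαδ : α = 0 ∨ δ = 0) : ∃ φ ψ, q = linearForm φ * linearForm ψ := by
  rcases eq_or_ne α 0 with rfl | hα
  · refine ⟨B.coord 2, δ • B.coord 0 + β • B.coord 1 + γ • B.coord 2,
      MvPolynomial.funext fun v => ?_⟩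
    simp only [hq.eval_eq, map_mul, eval_linearForm, LinearMap.add_apply, LinearMap.smul_apply,
      smul_eq_mul]
    ring
  · obtain rfl := hαδ.resolve_left hα
    obtain ⟨r, hr⟩ := exists_mul_sq_add_mul_add_eq_zero hα β γ
    refine ⟨B.coord 1 - r • B.coord 2, α • B.coord 1 + (β + α * r) • B.coord 2,
      MvPolynomial.funext fun v => ?_⟩
    simp only [hq.eval_eq, map_mul, eval_linearForm, LinearMap.add_apply, LinearMap.sub_apply,
      LinearMap.smul_apply, smul_eq_mul]
    linear_combination B.coord 2 v ^ 2 * hr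

lemma isParametrization [Infinite K] (hq : HasTangentEquation q B α β γ δ) (hα : α ≠ 0)
    (hδ : δ ≠ 0) :
    IsParametrization q (curveOfCoords B (conicCoords α β γ δ)) 2 (B.coord 1) (B.coord 2) where
  natDegree_le := natDegree_curveOfCoords_le B fun j => by
    fin_cases j
    · exact (Polynomial.natDegree_C_mul_le _ _).trans Polynomial.natDegree_quadratic_le
    · simp [conicCoords]
    · simp [conicCoords]
  aeval_eq_zero := Polynomial.funext fun s => by
    rw [eval_aeval_eq_eval_curvePoint, curvePoint_conicCoords, hq, Polynomial.eval_zero]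
    field_simp
    ring
  aeval_linearForm_num := aeval_curveOfCoords_linearForm_coord B _ 1
  aeval_linearForm_den := aeval_curveOfCoords_linearForm_coord B _ 2
  exists_eq_smul v hv := by
    obtain ⟨x, y, z, rfl⟩ := exists_eq_smul_add_smul_add_smul B v
    rw [hq] at hv
    simp only [curvePointAtInfinity_conicCoords, curvePoint_conicCoords, smul_add, smul_smul]
    rcases eq_or_ne z 0 with rfl | hz
    · obtain rfl : y = 0 := by simpa [hα] using hv
      refine ⟨-(x * δ / α), .inl ?_⟩
      have hx : -(x * δ / α) * (-δ⁻¹ * α) = x := by field_simp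
      rw [hx, zero_smul, zero_smul, add_zero, add_zero]
    · refine ⟨z, .inr ⟨y / z, ?_⟩⟩
      have hx : z * (-δ⁻¹ * (α * (y / z) ^ 2 + β * (y / z) + γ)) = x := by
        field_simp
        linear_combination -hv
      rw [hx, mul_div_cancel₀ y hz, mul_one]

lemma bezoutCount [IsAlgClosed K] (hq : HasTangentEquation q B α β γ δ) (hα : α ≠ 0) (hδ : δ ≠ 0)
    (hhom : q.IsHomogeneous 2) {c : MvPolynomial (Fin 3) K} {n : ℕ} (hc : c.IsHomogeneous n)
    (hcB : eval (B 0) c ≠ 0) : BezoutCount q c (n * 2) := by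
  refine (hq.isParametrization hα hδ).bezoutCount hhom hc ?_
  rw [curvePointAtInfinity_conicCoords, eval_smul_of_isHomogeneous hc]
  exact mul_ne_zero (pow_ne_zero _ (mul_ne_zero (neg_ne_zero.mpr (inv_ne_zero hδ)) hα)) hcB

end HasTangentEquation

lemma exists_eq_linearForm_mul_or_bezoutCount [IsAlgClosed K] {q c : MvPolynomial (Fin 3) K}
    {n : ℕ} (hq : q.IsHomogeneous 2) (hc : c.IsHomogeneous n) (hn : n ≠ 0)
    (hqc : IsRelPrime q c) :
    (∃ φ ψ, q = linearForm φ * linearForm ψ) ∨ BezoutCount q c (n * 2) := by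
  obtain ⟨a, hqa, hca⟩ := exists_eval_eq_zero_and_eval_ne_zero hqc
    (not_isUnit_of_isHomogeneous hq two_ne_zero)
  have ha := ne_zero_of_eval_ne_zero_of_isHomogeneous hc hn hca
  obtain ⟨B, rfl, α, β, γ, δ, hB⟩ := exists_hasTangentEquation hq ha hqa
  by_cases hαδ : α = 0 ∨ δ = 0
  · exact .inl (hB.exists_eq_linearForm_mul hαδ)
  · obtain ⟨hα, hδ⟩ := not_or.mp hαδ
    exact .inr (hB.bezoutCount hα hδ hq hc hca)

lemma bezoutCount_linearForm_mul [IsAlgClosed K] {φ ψ : Module.Dual K (Fin 3 → K)}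
    {c : MvPolynomial (Fin 3) K} {n : ℕ} (hc : c.IsHomogeneous n) (hn : n ≠ 0)
    (hφψc : IsRelPrime (linearForm φ * linearForm ψ) c) :
    BezoutCount (linearForm φ * linearForm ψ) c (n + n) := by
  have hne : ∀ {χ}, IsRelPrime (linearForm χ) c → χ ≠ 0 := by
    rintro _ hχc rfl
    refine not_isUnit_of_isHomogeneous hc hn (isRelPrime_zero_left.mp ?_)
    simpa [linearForm] using hχc
  have hφc : IsRelPrime (linearForm φ) c := hφψc.of_mul_left_left
  have hψc : IsRelPrime (linearForm ψ) c := hφψc.of_mul_left_right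
  exact (bezoutCount_linearForm (hne hφc) hc hn hφc).mul
    (bezoutCount_linearForm (hne hψc) hc hn hψc)

end Conics

theorem bezout_conic_cubic_general {K : Type*} [Field K] [IsAlgClosed K] {n : ℕ}
    {q c : MvPolynomial (Fin 3) K} (hq : q.IsHomogeneous 2) (hc : c.IsHomogeneous n)
    (hn : n ≠ 0) (hqc : IsRelPrime q c) :
    (projectiveZeros q ∩ projectiveZeros c).Finite ∧
    (projectiveZeros q ∩ projectiveZeros c).ncard ≤ 2 * n ∧
    (Transversal q c → (projectiveZeros q ∩ projectiveZeros c).ncard = 2 * n) := by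
  apply BezoutCount.finite_and_ncard
  obtain ⟨φ, ψ, rfl⟩ | hcount := exists_eq_linearForm_mul_or_bezoutCount hq hc hn hqc
  · exact two_mul n ▸ bezoutCount_linearForm_mul hc hn hqc
  · exact mul_comm n 2 ▸ hcount

/-- Bézout in the plane for a conic and a cubic: two plane projective curves
of degrees 2 and 3 with no common component meet in at most 6 points, and in
exactly 6 points if they meet transversally. -/
theorem bezout_conic_cubic
    (q c : MvPolynomial (Fin 3) ℂ)
    (hq : q.IsHomogeneous 2) (hc : c.IsHomogeneous 3)
    (hq0 : q ≠ 0) (hc0 : c ≠ 0)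
    (hcop : ∀ r : MvPolynomial (Fin 3) ℂ, r ∣ q → r ∣ c → IsUnit r) :
    (projZeroLocus q ∩ projZeroLocus c).Finite ∧
    (projZeroLocus q ∩ projZeroLocus c).ncard ≤ 6 ∧
    ((∀ v : Fin 3 → ℂ, v ≠ 0 → eval v q = 0 → eval v c = 0 →
        LinearIndependent ℂ
          ![fun i => eval v (pderiv i q), fun i => eval v (pderiv i c)]) →
      (projZeroLocus q ∩ projZeroLocus c).ncard = 6) :=
  bezout_conic_cubic_general hq hc three_ne_zero fun _ => hcop _
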